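/- arXiv:1709.00658 — 2 statements merged into one kernel-verified Lean document; each statement's English description precedes it below -/
import Mathlib

section
/- Let B be a class of right R-modules such that GF_B(R) is closed under extensions, hence (GF_B(R), GC_B(R)) and (F(R), C(R)) are complete hereditary cotorsion pairs with F(R) ⊆ GF_B(R), GC_B(R) ⊆ C(R), and GF_B(R) ∩ GC_B(R) = F(R) ∩ C(R). Then there exists a unique thick class W of left R-modules such that GF_B(R) ∩ W = F(R) and C(R) ∩ W = GC_B(R) (Gillespie's two-cotorsion-pair theorem applied to this situation). -/
open LinearMap

/-- A witness complex for Gorenstein `B`-flatness: an exact complex of flat modules which stays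
exact after applying `N ⊗_R -` for every `N` in the class `B`. The complex is encoded as a family
`F : ℤ → ModuleCat R` with differentials `d n : F (n+1) → F n`. -/
def IsGBFlatComplex (R : Type) [CommRing R] (B : ModuleCat R → Prop)
    (F : ℤ → ModuleCat R) (d : ∀ n : ℤ, F (n + 1) →ₗ[R] F n) : Prop :=
  (∀ n : ℤ, Module.Flat R (F n)) ∧
  (∀ n : ℤ, d n ∘ₗ d (n + 1) = 0) ∧
  (∀ n : ℤ, Function.Exact (d (n + 1)) (d n)) ∧
  (∀ N : ModuleCat R, B N → ∀ n : ℤ,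
    Function.Exact (lTensor N (d (n + 1))) (lTensor N (d n)))

/-- `M` is Gorenstein `B`-flat if it is the zeroth cycle module `Z₀ = ker (F₀ → F₋₁)` of an
exact, `(B ⊗_R -)`-acyclic complex of flat modules. -/
def GorensteinBFlat (R : Type) [CommRing R] (B : ModuleCat R → Prop) (M : ModuleCat R) : Prop :=
  ∃ (F : ℤ → ModuleCat.{0} R) (d : ∀ n : ℤ, F (n + 1) →ₗ[R] F n),
    IsGBFlatComplex R B F d ∧ Nonempty (M ≃ₗ[R] LinearMap.ker (d (-1)))

/-- `Ext¹_R(M, N) = 0`, expressed elementarily: every short exact sequence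
`0 → N → E → M → 0` of `R`-modules splits. -/
def Ext1Vanishes (R : Type) [CommRing R] (M N : ModuleCat.{0} R) : Prop :=
  ∀ (E : ModuleCat.{0} R) (i : N →ₗ[R] E) (p : E →ₗ[R] M),
    Function.Injective i → Function.Exact i p → Function.Surjective p →
    ∃ s : M →ₗ[R] E, p ∘ₗ s = LinearMap.id

/-- The class of cotorsion modules: `C(R) = F(R)^⊥`. -/
def Cotorsion (R : Type) [CommRing R] (M : ModuleCat.{0} R) : Prop :=
  ∀ F : ModuleCat.{0} R, Module.Flat R F → Ext1Vanishes R F M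

/-- The class of Gorenstein `B`-cotorsion modules: `GC_B(R) = GF_B(R)^⊥`. -/
def GBCotorsion (R : Type) [CommRing R] (B : ModuleCat R → Prop) (M : ModuleCat.{0} R) : Prop :=
  ∀ G : ModuleCat.{0} R, GorensteinBFlat R B G → Ext1Vanishes R G M

/-- A class `W` of modules is thick if it is closed under direct summands (retracts),
extensions, kernels of epimorphisms and cokernels of monomorphisms between its members. -/
def IsThickClass (R : Type) [CommRing R] (W : ModuleCat.{0} R → Prop) : Prop :=
  (∀ (X Y : ModuleCat.{0} R) (i : X →ₗ[R] Y) (r : Y →ₗ[R] X),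
      r ∘ₗ i = LinearMap.id → W Y → W X) ∧
  (∀ (X Y Z : ModuleCat.{0} R) (i : X →ₗ[R] Y) (p : Y →ₗ[R] Z),
      Function.Injective i → Function.Exact i p → Function.Surjective p →
      W X → W Z → W Y) ∧
  (∀ (X Y Z : ModuleCat.{0} R) (i : X →ₗ[R] Y) (p : Y →ₗ[R] Z),
      Function.Injective i → Function.Exact i p → Function.Surjective p →
      W Y → W Z → W X) ∧
  (∀ (X Y Z : ModuleCat.{0} R) (i : X →ₗ[R] Y) (p : Y →ₗ[R] Z),
      Function.Injective i → Function.Exact i p → Function.Surjective p →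
      W X → W Y → W Z)

/-! Take for `W` the objects `X` with a short exact sequence `0 ⟶ X ⟶ N ⟶ A ⟶ 0`, where `N ∈ GC_B`
and `A ∈ F`. Since the two cotorsion pairs have the same core, special `GF_B`-precovers of `N` and
special `F`-preenvelopes of `A` turn such sequences into sequences `0 ⟶ N' ⟶ A' ⟶ X ⟶ 0` of the
same kind and back. Pushing out along the first kind and pulling back along the second then
reduces the closure properties of `W` to sequences with an end term in `GC_B` or `F`. Conversely,
a thick class `W'` with the prescribed intersections contains `GC_B` and `F`, hence `W`; and the
special `F`-preenvelope of an object `X` of it lies in `C ∩ W' = GC_B`, so `X` belongs to `W`. The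
argument works in any abelian category. -/

section

open CategoryTheory Limits

universe v u

/-! ### Short exact sequences -/

section ShortExact

variable {C : Type u} [Category.{v} C] [Abelian C]

/-- `0 ⟶ X ⟶ Y ⟶ Z ⟶ 0` is a short exact sequence with maps `i` and `p`: the unbundled form of
`ShortComplex.ShortExact`, in which sequences can be spliced without equalities of objects. -/
structure IsShortExact {X Y Z : C} (i : X ⟶ Y) (p : Y ⟶ Z) : Prop where
  w : i ≫ p = 0
  shortExact : (ShortComplex.mk i p w).ShortExact

namespace IsShortExact

variable {X Y Z : C} {i : X ⟶ Y} {p : Y ⟶ Z}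

lemma mono (h : IsShortExact i p) : Mono i := h.shortExact.mono_f

lemma epi (h : IsShortExact i p) : Epi p := h.shortExact.epi_g

lemma op (h : IsShortExact i p) : IsShortExact p.op i.op :=
  ⟨by rw [← op_comp, h.w, op_zero], h.shortExact.op⟩

lemma unop {X Y Z : Cᵒᵖ} {i : X ⟶ Y} {p : Y ⟶ Z} (h : IsShortExact i p) :
    IsShortExact p.unop i.unop :=
  ⟨by rw [← unop_comp, h.w, unop_zero], h.shortExact.unop⟩

lemma exists_desc (h : IsShortExact i p) {T : C} (f : Y ⟶ T) (hf : i ≫ f = 0) :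
    ∃ g : Z ⟶ T, p ≫ g = f :=
  have : Epi p := h.epi
  h.shortExact.exact.desc' f hf

lemma exists_lift (h : IsShortExact i p) {T : C} (f : T ⟶ Y) (hf : f ≫ p = 0) :
    ∃ g : T ⟶ X, g ≫ i = f :=
  have : Mono i := h.mono
  h.shortExact.exact.lift' f hf

lemma of_exists_desc [Mono i] [Epi p] (w : i ≫ p = 0)
    (desc : ∀ {T : C} (f : Y ⟶ T), i ≫ f = 0 → ∃ g : Z ⟶ T, p ≫ g = f) : IsShortExact i p := by
  choose g hg using @desc
  refine ⟨w, .mk' (ShortComplex.exact_of_g_is_cokernel _ ?_) ‹_› ‹_›⟩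
  exact CokernelCofork.IsColimit.ofπ' p w fun f hf ↦ ⟨g f hf, hg f hf⟩

lemma of_isPushout (h : IsShortExact i p) {N E : C} {j : X ⟶ N} {a : Y ⟶ E} {b : N ⟶ E}
    (sq : IsPushout i j a b) : ∃ q : E ⟶ Z, a ≫ q = p ∧ IsShortExact b q := by
  have : Mono b := (MorphismProperty.monomorphisms C).of_isPushout sq.flip h.mono
  obtain ⟨q, hq, hb⟩ := sq.exists_desc p (0 : N ⟶ Z) (by rw [h.w, Limits.comp_zero])
  have := h.epi
  have : Epi q := epi_of_epi_fac hq
  refine ⟨q, hq, .of_exists_desc hb fun {T} f hf ↦ ?_⟩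
  obtain ⟨g, hg⟩ := h.exists_desc (a ≫ f) (by rw [sq.w_assoc, hf, Limits.comp_zero])
  exact ⟨g, sq.hom_ext (by rw [reassoc_of% hq, hg]) (by rw [reassoc_of% hb, Limits.zero_comp, hf])⟩

lemma of_isPullback (h : IsShortExact i p) {A E : C} {q : A ⟶ Z} {a : E ⟶ Y} {b : E ⟶ A}
    (sq : IsPullback a b p q) : ∃ j : X ⟶ E, j ≫ a = i ∧ IsShortExact j b := by
  obtain ⟨j, hj, hb⟩ := h.op.of_isPushout sq.op.flip
  exact ⟨j.unop, Quiver.Hom.op_inj hj, hb.unop⟩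

/-- The third isomorphism theorem for `X ⊆ Y ⊆ N`: here `Q = N / X`. -/
lemma exists_comp_mono {A N B : C} {q : Y ⟶ A} {j : Y ⟶ N} {r : N ⟶ B} (hY : IsShortExact i q)
    (hN : IsShortExact j r) :
    ∃ (Q : C) (π : N ⟶ Q) (s : A ⟶ Q) (t : Q ⟶ B),
      IsShortExact (i ≫ j) π ∧ IsShortExact s t ∧ j ≫ π = q ≫ s ∧ π ≫ t = r := by
  have sq := IsPushout.of_hasPushout j q
  obtain ⟨t, ht, hst⟩ := hN.of_isPushout sq
  refine ⟨_, _, _, t, ?_, hst, sq.w, ht⟩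
  have := hY.mono
  have := hN.mono
  have : Epi (pushout.inl j q) :=
    (MorphismProperty.epimorphisms C).of_isPushout sq hY.epi
  refine .of_exists_desc (by rw [Category.assoc, sq.w, reassoc_of% hY.w, Limits.zero_comp])
    fun f hf ↦ ?_
  obtain ⟨g, hg⟩ := hY.exists_desc (j ≫ f) (by rw [← Category.assoc, hf])
  obtain ⟨k, hk, -⟩ := sq.exists_desc f g hg.symm
  exact ⟨k, hk⟩

lemma exists_comp_epi {K A : C} {k : K ⟶ A} {g : A ⟶ Y} (hA : IsShortExact k g)
    (hY : IsShortExact i p) :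
    ∃ (P : C) (s : K ⟶ P) (t : P ⟶ X) (ι : P ⟶ A),
      IsShortExact s t ∧ IsShortExact ι (g ≫ p) ∧ ι ≫ g = t ≫ i := by
  obtain ⟨Q, π, s, t, hπ, hst, w, -⟩ := hY.op.exists_comp_mono hA.op
  exact ⟨Q.unop, t.unop, s.unop, π.unop, hst.unop, hπ.unop, Quiver.Hom.op_inj w⟩

lemma exists_section_of_retraction (h : IsShortExact i p) {r : Y ⟶ X} (hr : i ≫ r = 𝟙 X) :
    ∃ s : Z ⟶ Y, s ≫ p = 𝟙 Z := by
  have := h.mono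
  have := h.epi
  exact ⟨_, (ShortComplex.Splitting.ofExactOfRetraction _ h.shortExact.exact r hr this).s_g⟩

lemma exists_retraction_of_section (h : IsShortExact i p) {s : Z ⟶ Y} (hs : s ≫ p = 𝟙 Z) :
    ∃ r : Y ⟶ X, i ≫ r = 𝟙 X := by
  have := h.mono
  exact ⟨_, (ShortComplex.Splitting.ofExactOfSection _ h.shortExact.exact s hs this).f_r⟩

end IsShortExact

end ShortExact

/-! ### Vanishing of `Ext¹` -/

section ExtOne

variable {C : Type u} [Category.{v} C] [Abelian C]

/-- `Ext¹(X, Y) = 0` in Yoneda form: every extension `0 ⟶ Y ⟶ E ⟶ X ⟶ 0` splits. -/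
def ExtOneVanishes (X Y : C) : Prop :=
  ∀ ⦃E : C⦄ ⦃i : Y ⟶ E⦄ ⦃p : E ⟶ X⦄, IsShortExact i p → ∃ s : X ⟶ E, s ≫ p = 𝟙 X

namespace ExtOneVanishes

variable {A X Y Z : C} {i : X ⟶ Y} {p : Y ⟶ Z}

lemma exists_extension {N : C} (hZN : ExtOneVanishes Z N) (h : IsShortExact i p) (f : X ⟶ N) :
    ∃ g : Y ⟶ N, i ≫ g = f := by
  have sq := IsPushout.of_hasPushout i f
  obtain ⟨q, -, hq⟩ := h.of_isPushout sq
  obtain ⟨s, hs⟩ := hZN hq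
  obtain ⟨r, hr⟩ := hq.exists_retraction_of_section hs
  exact ⟨pushout.inl i f ≫ r, by rw [sq.w_assoc, hr, Category.comp_id]⟩

lemma exists_lift (hAX : ExtOneVanishes A X) (h : IsShortExact i p) (f : A ⟶ Z) :
    ∃ g : A ⟶ Y, g ≫ p = f := by
  have sq := IsPullback.of_hasPullback p f
  obtain ⟨j, -, hj⟩ := h.of_isPullback sq
  obtain ⟨s, hs⟩ := hAX hj
  exact ⟨s ≫ pullback.fst p f, by rw [Category.assoc, sq.w, reassoc_of% hs]⟩

lemma of_retract (hAY : ExtOneVanishes A Y) (ρ : Retract X Y) : ExtOneVanishes A X := by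
  intro E j q h
  obtain ⟨g, hg⟩ := hAY.exists_extension h ρ.i
  exact h.exists_section_of_retraction (r := g ≫ ρ.r) (by rw [reassoc_of% hg, ρ.retract])

lemma of_isShortExact (h : IsShortExact i p) (hAX : ExtOneVanishes A X)
    (hAZ : ExtOneVanishes A Z) : ExtOneVanishes A Y := by
  intro E j q hE
  obtain ⟨Q, π, s, t, hπ, hst, -, hπt⟩ := h.exists_comp_mono hE
  obtain ⟨σ, hσ⟩ := hAZ hst
  obtain ⟨τ, hτ⟩ := hAX.exists_lift hπ σ
  exact ⟨τ, by rw [← hπt, reassoc_of% hτ, hσ]⟩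

end ExtOneVanishes

end ExtOne

/-! ### Classes of objects and right orthogonals -/

section Classes

variable {C : Type u} [Category.{v} C] [Abelian C]

/-- The class `P` contains the kernel of every epimorphism between its members. -/
def ClosedUnderEpiKernels (P : ObjectProperty C) : Prop :=
  ∀ ⦃X Y Z : C⦄ ⦃i : X ⟶ Y⦄ ⦃p : Y ⟶ Z⦄, IsShortExact i p → P Y → P Z → P X

/-- The class `P` contains the cokernel of every monomorphism between its members. -/
def ClosedUnderMonoCokernels (P : ObjectProperty C) : Prop :=
  ∀ ⦃X Y Z : C⦄ ⦃i : X ⟶ Y⦄ ⦃p : Y ⟶ Z⦄, IsShortExact i p → P X → P Y → P Z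

/-- Thick classes in an abelian category; for modules this is `IsThickClass`. -/
structure IsThick (W : ObjectProperty C) : Prop where
  retracts : W.IsStableUnderRetracts
  extensions : W.IsClosedUnderExtensions
  epiKernels : ClosedUnderEpiKernels W
  monoCokernels : ClosedUnderMonoCokernels W

lemma IsShortExact.prop_middle {P : ObjectProperty C} [P.IsClosedUnderExtensions] {X Y Z : C}
    {i : X ⟶ Y} {p : Y ⟶ Z} (h : IsShortExact i p) (hX : P X) (hZ : P Z) : P Y :=
  P.prop_X₂_of_shortExact h.shortExact hX hZ

lemma isClosedUnderExtensions_iff {P : ObjectProperty C} : P.IsClosedUnderExtensions ↔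
    ∀ ⦃X Y Z : C⦄ ⦃i : X ⟶ Y⦄ ⦃p : Y ⟶ Z⦄, IsShortExact i p → P X → P Z → P Y :=
  ⟨fun _ _ _ _ _ _ h ↦ h.prop_middle, fun h ↦ ⟨fun hS ↦ h ⟨_, hS⟩⟩⟩

/-- The right `Ext¹`-orthogonal class `P^⊥` of `P`. -/
def extRightOrthogonal (P : ObjectProperty C) : ObjectProperty C :=
  fun X ↦ ∀ ⦃A : C⦄, P A → ExtOneVanishes A X

lemma extRightOrthogonal_antitone {P Q : ObjectProperty C} (hPQ : P ≤ Q) :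
    extRightOrthogonal Q ≤ extRightOrthogonal P :=
  fun _ hX _ hA ↦ hX (hPQ _ hA)

instance (P : ObjectProperty C) : (extRightOrthogonal P).IsStableUnderRetracts where
  of_retract ρ hY _ hA := (hY hA).of_retract ρ

instance (P : ObjectProperty C) : (extRightOrthogonal P).IsClosedUnderExtensions where
  prop_X₂_of_shortExact hS hX hZ _ hA := .of_isShortExact ⟨_, hS⟩ (hX hA) (hZ hA)

lemma closedUnderMonoCokernels_extRightOrthogonal {P : ObjectProperty C}
    (hker : ClosedUnderEpiKernels P)
    (hcover : ∀ E : C, ∃ (K P₀ : C) (k : K ⟶ P₀) (g : P₀ ⟶ E), IsShortExact k g ∧ P P₀) :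
    ClosedUnderMonoCokernels (extRightOrthogonal P) := by
  intro X Y Z i p h hX hY A hA E j q hE
  obtain ⟨K, P₀, k, g, hkg, hP₀⟩ := hcover E
  obtain ⟨P₁, s, t, ι, -, hι, hιg⟩ := hkg.exists_comp_epi hE
  have hP₁ : P P₁ := hker hι hP₀ hA
  obtain ⟨l, hl⟩ := (hX hP₁).exists_lift h t
  obtain ⟨m, hm⟩ := (hY hA).exists_extension hι l
  obtain ⟨σ, hσ⟩ := hι.exists_desc (g - m ≫ p ≫ j)
    (by rw [Preadditive.comp_sub, hιg, reassoc_of% hm, reassoc_of% hl, sub_self])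
  have := hι.epi
  refine ⟨σ, (cancel_epi (g ≫ q)).1 ?_⟩
  rw [← Category.assoc, hσ, Preadditive.sub_comp, Category.assoc, Category.assoc, hE.w,
    Limits.comp_zero, Limits.comp_zero, sub_zero, Category.comp_id]

end Classes

/-! ### Gillespie's theorem -/

section Gillespie

variable {C : Type u} [Category.{v} C] [Abelian C]

/-- The compatibility in Gillespie's theorem of two complete hereditary cotorsion pairs `(G, G^⊥)`
and `(F, F^⊥)` with `F ⊆ G` and the same core. Heredity is recorded on the left classes,
completeness as special precovers for the first pair and special preenvelopes for the second. -/
structure IsCompatiblePair (G F : ObjectProperty C) : Prop where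
  le : F ≤ G
  extensions_left : G.IsClosedUnderExtensions
  extensions_right : F.IsClosedUnderExtensions
  epiKernels_left : ClosedUnderEpiKernels G
  epiKernels_right : ClosedUnderEpiKernels F
  exists_precover (X : C) : ∃ (N A : C) (i : N ⟶ A) (p : A ⟶ X),
    IsShortExact i p ∧ G A ∧ extRightOrthogonal G N
  exists_preenvelope (X : C) : ∃ (N A : C) (i : X ⟶ N) (p : N ⟶ A),
    IsShortExact i p ∧ extRightOrthogonal F N ∧ F A
  core : G ⊓ extRightOrthogonal G = F ⊓ extRightOrthogonal F

/-- The class of trivial objects of the Hovey triple `(G, W, F^⊥)`: the `X` that embed into an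
object of `G^⊥` with cokernel in `F`. -/
def hoveyClass (G F : ObjectProperty C) : ObjectProperty C :=
  fun X ↦ ∃ (N A : C) (i : X ⟶ N) (p : N ⟶ A), IsShortExact i p ∧ extRightOrthogonal G N ∧ F A

namespace IsCompatiblePair

variable {G F : ObjectProperty C} (h : IsCompatiblePair G F)
include h

lemma right_of_left {X : C} (hX : G X) (hX' : extRightOrthogonal G X) : F X :=
  (h.core.le X ⟨hX, hX'⟩).1

lemma extRightOrthogonal_left_of_right {X : C} (hX : F X) (hX' : extRightOrthogonal F X) :
    extRightOrthogonal G X :=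
  (h.core.ge X ⟨hX, hX'⟩).2

lemma monoCokernels_extRightOrthogonal : ClosedUnderMonoCokernels (extRightOrthogonal G) :=
  closedUnderMonoCokernels_extRightOrthogonal h.epiKernels_left fun E ↦
    let ⟨K, A, k, g, hkg, hA, _⟩ := h.exists_precover E
    ⟨K, A, k, g, hkg, hA⟩

/-- The class is self-dual, because a special `G`-precover of an object of `G^⊥` and a special
`F`-preenvelope of an object of `F` both lie in the common core. -/
lemma hoveyClass_iff_exists_cover {X : C} :
    hoveyClass G F X ↔ ∃ (N A : C) (i : N ⟶ A) (p : A ⟶ X),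
      IsShortExact i p ∧ extRightOrthogonal G N ∧ F A := by
  have := h.extensions_right
  constructor
  · rintro ⟨N, A, i, p, hX, hN, hA⟩
    obtain ⟨N', A', k, g, hkg, hA', hN'⟩ := h.exists_precover N
    obtain ⟨P, s, t, ι, hst, hι, -⟩ := hkg.exists_comp_epi hX
    have hFA' : F A' := h.right_of_left hA' (hkg.prop_middle hN' hN)
    exact ⟨N', P, s, t, hst, hN', h.epiKernels_right hι hFA' hA⟩
  · rintro ⟨N, A, i, p, hX, hN, hA⟩
    obtain ⟨N', A', k, g, hkg, hN', hA'⟩ := h.exists_preenvelope A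
    obtain ⟨Q, π, s, t, hπ, hst, -⟩ := hX.exists_comp_mono hkg
    have hGN' : extRightOrthogonal G N' :=
      h.extRightOrthogonal_left_of_right (hkg.prop_middle hA hA') hN'
    exact ⟨Q, A', s, t, hst, h.monoCokernels_extRightOrthogonal hπ hN hGN', hA'⟩

lemma le_hoveyClass : F ≤ hoveyClass G F := by
  have := h.extensions_right
  intro X hX
  obtain ⟨N, A, i, p, hip, hN, hA⟩ := h.exists_preenvelope X
  exact ⟨N, A, i, p, hip, h.extRightOrthogonal_left_of_right (hip.prop_middle hX hA) hN, hA⟩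

lemma extRightOrthogonal_le_hoveyClass : extRightOrthogonal G ≤ hoveyClass G F := by
  intro X hX
  obtain ⟨N, A, i, p, hip, hA, hN⟩ := h.exists_precover X
  exact h.hoveyClass_iff_exists_cover.2
    ⟨N, A, i, p, hip, hN, h.right_of_left hA (hip.prop_middle hN hX)⟩

lemma inf_hoveyClass : G ⊓ hoveyClass G F = F := by
  have := h.extensions_left
  refine le_antisymm ?_ (le_inf h.le h.le_hoveyClass)
  rintro X ⟨hX, N, A, i, p, hip, hN, hA⟩
  have hFN : F N := h.right_of_left (hip.prop_middle hX (h.le A hA)) hN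
  exact h.epiKernels_right hip hFN hA

lemma extRightOrthogonal_inf_hoveyClass :
    extRightOrthogonal F ⊓ hoveyClass G F = extRightOrthogonal G := by
  have hGF := extRightOrthogonal_antitone h.le
  refine le_antisymm ?_ (le_inf hGF h.extRightOrthogonal_le_hoveyClass)
  rintro X ⟨hX, hWX⟩
  obtain ⟨N, A, i, p, hip, hN, hA⟩ := h.hoveyClass_iff_exists_cover.1 hWX
  have hGA : extRightOrthogonal G A :=
    h.extRightOrthogonal_left_of_right hA (hip.prop_middle (hGF N hN) hX)
  exact h.monoCokernels_extRightOrthogonal hip hN hGA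

section TwoOutOfThree

variable {X Y Z : C} {i : X ⟶ Y} {p : Y ⟶ Z}

lemma hoveyClass_kernel_of_right (hip : IsShortExact i p) (hY : hoveyClass G F Y) (hZ : F Z) :
    hoveyClass G F X := by
  have := h.extensions_right
  obtain ⟨N, A, j, q, hjq, hN, hA⟩ := hY
  obtain ⟨Q, π, s, t, hπ, hst, -⟩ := hip.exists_comp_mono hjq
  exact ⟨N, Q, i ≫ j, π, hπ, hN, hst.prop_middle hZ hA⟩

lemma hoveyClass_cokernel_of_extRightOrthogonal (hip : IsShortExact i p)
    (hX : extRightOrthogonal G X) (hY : hoveyClass G F Y) : hoveyClass G F Z := by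
  obtain ⟨N, A, j, q, hjq, hN, hA⟩ := h.hoveyClass_iff_exists_cover.1 hY
  obtain ⟨P, s, t, ι, hst, hι, -⟩ := hjq.exists_comp_epi hip
  exact h.hoveyClass_iff_exists_cover.2 ⟨P, A, ι, q ≫ p, hι, hst.prop_middle hN hX, hA⟩

lemma hoveyClass_middle_of_extRightOrthogonal_of_right (hip : IsShortExact i p)
    (hX : extRightOrthogonal G X) (hZ : F Z) : hoveyClass G F Y := by
  have := h.extensions_right
  obtain ⟨N, A, k, g, hkg, hA, hN⟩ := h.exists_precover Y
  obtain ⟨P, s, t, ι, hst, hι, -⟩ := hkg.exists_comp_epi hip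
  have hFP : F P := h.right_of_left (h.epiKernels_left hι hA (h.le Z hZ))
    (hst.prop_middle hN hX)
  exact h.hoveyClass_iff_exists_cover.2 ⟨N, A, k, g, hkg, hN, hι.prop_middle hFP hZ⟩

lemma hoveyClass_middle (hip : IsShortExact i p) (hX : hoveyClass G F X)
    (hZ : hoveyClass G F Z) : hoveyClass G F Y := by
  obtain ⟨N, A, j, q, hjq, hN, hA⟩ := hX
  obtain ⟨N', A', j', q', hjq', hN', hA'⟩ := h.hoveyClass_iff_exists_cover.1 hZ
  have sq := IsPushout.of_hasPushout i j
  obtain ⟨p₁, -, hp₁⟩ := hip.of_isPushout sq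
  obtain ⟨q₁, -, hq₁⟩ := hjq.of_isPushout sq.flip
  have sq' := IsPullback.of_hasPullback p₁ q'
  obtain ⟨k, -, hk⟩ := hp₁.of_isPullback sq'
  obtain ⟨l, -, hl⟩ := hjq'.of_isPullback sq'.flip
  have hE : hoveyClass G F (pullback p₁ q') :=
    h.hoveyClass_middle_of_extRightOrthogonal_of_right hk hN hA'
  exact h.hoveyClass_kernel_of_right hq₁ (h.hoveyClass_cokernel_of_extRightOrthogonal hl hN' hE) hA

end TwoOutOfThree

lemma monoCokernels_hoveyClass : ClosedUnderMonoCokernels (hoveyClass G F) := by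
  intro X Y Z i p hip hX hY
  obtain ⟨N, A, j, q, hjq, hN, hA⟩ := hX
  have sq := IsPushout.of_hasPushout i j
  obtain ⟨p₁, -, hp₁⟩ := hip.of_isPushout sq
  obtain ⟨q₁, -, hq₁⟩ := hjq.of_isPushout sq.flip
  have hE := h.hoveyClass_middle hq₁ hY (h.le_hoveyClass A hA)
  exact h.hoveyClass_cokernel_of_extRightOrthogonal hp₁ hN hE

lemma epiKernels_hoveyClass : ClosedUnderEpiKernels (hoveyClass G F) := by
  intro X Y Z i p hip hY hZ
  obtain ⟨N, A, j, q, hjq, hN, hA⟩ := h.hoveyClass_iff_exists_cover.1 hZ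
  have sq := IsPullback.of_hasPullback p q
  obtain ⟨k, -, hk⟩ := hip.of_isPullback sq
  obtain ⟨l, -, hl⟩ := hjq.of_isPullback sq.flip
  have hE := h.hoveyClass_middle hl (h.extRightOrthogonal_le_hoveyClass N hN) hY
  exact h.hoveyClass_kernel_of_right hk hE hA

/-- If `X` is a retract of `Y ∈ W`, push out its special `F`-preenvelope `X ⟶ N` along `X ⟶ Y` and
replace the result by its own special `F`-preenvelope: the latter lies in `G^⊥` and still retracts
onto `N`. -/
lemma isStableUnderRetracts_hoveyClass : (hoveyClass G F).IsStableUnderRetracts where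
  of_retract {X Y} ρ hY := by
    obtain ⟨N, A, j, q, hjq, hN, hA⟩ := h.exists_preenvelope X
    have sq := IsPushout.of_hasPushout ρ.i j
    obtain ⟨q₁, -, hq₁⟩ := hjq.of_isPushout sq.flip
    have hY₁ := h.hoveyClass_middle hq₁ hY (h.le_hoveyClass A hA)
    obtain ⟨N', A', j', q', hjq', hN', hA'⟩ := h.exists_preenvelope (pushout ρ.i j)
    have hGN' : extRightOrthogonal G N' := h.extRightOrthogonal_inf_hoveyClass.le N'
      ⟨hN', h.hoveyClass_middle hjq' hY₁ (h.le_hoveyClass A' hA')⟩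
    obtain ⟨σ, -, hσ⟩ := sq.exists_desc (ρ.r ≫ j) (𝟙 N)
      (by rw [ρ.retract_assoc, Category.comp_id])
    obtain ⟨τ, hτ⟩ := (hN hA').exists_extension hjq' σ
    refine ⟨N, A, j, q, hjq, ?_, hA⟩
    exact (extRightOrthogonal G).prop_of_retract
      { i := pushout.inr ρ.i j ≫ j', r := τ, retract := by rw [Category.assoc, hτ, hσ] } hGN'

lemma isThick_hoveyClass : IsThick (hoveyClass G F) where
  retracts := h.isStableUnderRetracts_hoveyClass
  extensions := isClosedUnderExtensions_iff.2 fun _ _ _ _ _ ↦ h.hoveyClass_middle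
  epiKernels := h.epiKernels_hoveyClass
  monoCokernels := h.monoCokernels_hoveyClass

lemma eq_hoveyClass_of_isThick {W : ObjectProperty C} (hW : IsThick W) (hGW : G ⊓ W = F)
    (hFW : extRightOrthogonal F ⊓ W = extRightOrthogonal G) : W = hoveyClass G F := by
  have hF : F ≤ W := hGW.ge.trans inf_le_right
  have hG : extRightOrthogonal G ≤ W := hFW.ge.trans inf_le_right
  have := hW.extensions
  refine le_antisymm (fun X hX ↦ ?_) ?_
  · obtain ⟨N, A, i, p, hip, hN, hA⟩ := h.exists_preenvelope X
    exact ⟨N, A, i, p, hip, hFW.le N ⟨hN, hip.prop_middle hX (hF A hA)⟩, hA⟩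
  · rintro X ⟨N, A, i, p, hip, hN, hA⟩
    exact hW.epiKernels hip (hG N hN) (hF A hA)

end IsCompatiblePair

theorem exists_unique_thick_class_gorensteinBFlat_hovey_triple_general {G F : ObjectProperty C}
    (h : IsCompatiblePair G F) :
    ∃! W : ObjectProperty C, IsThick W ∧ G ⊓ W = F ∧
      extRightOrthogonal F ⊓ W = extRightOrthogonal G :=
  ⟨hoveyClass G F,
    ⟨h.isThick_hoveyClass, h.inf_hoveyClass, h.extRightOrthogonal_inf_hoveyClass⟩,
    fun _ ⟨hW, hGW, hFW⟩ ↦ h.eq_hoveyClass_of_isThick hW hGW hFW⟩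

end Gillespie

/-! ### Modules -/

section Flat

variable {R M N P : Type*} [CommRing R] [AddCommGroup M] [AddCommGroup N] [AddCommGroup P]
  [Module R M] [Module R N] [Module R P] {i : M →ₗ[R] N} {p : N →ₗ[R] P}

lemma flat_of_shortExact (hi : Function.Injective i) (hip : Function.Exact i p)
    (hp : Function.Surjective p) [Module.Flat R M] [Module.Flat R P] : Module.Flat R N := by
  rw [Module.Flat.iff_rTensor_preserves_injective_linearMap]
  intro A A' _ _ _ _ φ hφ
  have hM := Module.Flat.rTensor_preserves_injective_linearMap (M := M) φ hφ
  have hP := Module.Flat.rTensor_preserves_injective_linearMap (M := P) φ hφ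
  have hiA' := lTensor_injective_of_exact_of_flat p hp i hi hip A'
  have hcomm_i (x) : φ.rTensor N (i.lTensor A x) = i.lTensor A' (φ.rTensor M x) := by
    simp only [← LinearMap.comp_apply, lTensor_comp_rTensor, rTensor_comp_lTensor]
  have hcomm_p (y) : φ.rTensor P (p.lTensor A y) = p.lTensor A' (φ.rTensor N y) := by
    simp only [← LinearMap.comp_apply, lTensor_comp_rTensor, rTensor_comp_lTensor]
  refine (injective_iff_map_eq_zero _).2 fun y hy ↦ ?_
  obtain ⟨x, rfl⟩ : y ∈ Set.range (i.lTensor A) :=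
    (lTensor_exact A hip hp y).1 (hP (by rw [hcomm_p, hy, map_zero, map_zero]))
  have hx : x = 0 := hM (hiA' (by rw [← hcomm_i, hy, map_zero, map_zero]))
  rw [hx, map_zero]

lemma flat_kernel_of_shortExact (hi : Function.Injective i) (hip : Function.Exact i p)
    (hp : Function.Surjective p) [Module.Flat R N] [Module.Flat R P] : Module.Flat R M := by
  rw [Module.Flat.iff_rTensor_preserves_injective_linearMap]
  intro A A' _ _ _ _ φ hφ
  have hcomp : i.lTensor A' ∘ₗ φ.rTensor M = φ.rTensor N ∘ₗ i.lTensor A := by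
    rw [lTensor_comp_rTensor, rTensor_comp_lTensor]
  refine Function.Injective.of_comp (f := i.lTensor A') ?_
  rw [← coe_comp, hcomp, coe_comp]
  exact (Module.Flat.rTensor_preserves_injective_linearMap φ hφ).comp
    (lTensor_injective_of_exact_of_flat p hp i hi hip A)

end Flat

section ModuleCat

variable {R : Type u} [Ring R]

lemma isShortExact_ofHom_iff {X Y Z : ModuleCat.{v} R} {i : X →ₗ[R] Y} {p : Y →ₗ[R] Z} :
    IsShortExact (ModuleCat.ofHom i) (ModuleCat.ofHom p) ↔
      Function.Injective i ∧ Function.Exact i p ∧ Function.Surjective p := by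
  constructor
  · intro h
    exact ⟨h.shortExact.moduleCat_injective_f,
      (ShortComplex.ShortExact.moduleCat_exact_iff_function_exact _).1 h.shortExact.exact,
      h.shortExact.moduleCat_surjective_g⟩
  · rintro ⟨hi, hip, hp⟩
    exact ⟨ModuleCat.hom_ext hip.linearMap_comp_eq_zero,
      ModuleCat.shortComplex_shortExact _ hip hi hp⟩

lemma forall_isShortExact_iff {Q : ModuleCat.{v} R → ModuleCat.{v} R → ModuleCat.{v} R → Prop} :
    (∀ ⦃X Y Z : ModuleCat.{v} R⦄ ⦃i : X ⟶ Y⦄ ⦃p : Y ⟶ Z⦄, IsShortExact i p → Q X Y Z) ↔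
      ∀ (X Y Z : ModuleCat.{v} R) (i : X →ₗ[R] Y) (p : Y →ₗ[R] Z),
        Function.Injective i → Function.Exact i p → Function.Surjective p → Q X Y Z := by
  constructor
  · intro h X Y Z i p hi hip hp
    exact h (isShortExact_ofHom_iff.2 ⟨hi, hip, hp⟩)
  · intro h X Y Z i p hip
    obtain ⟨hi, hip, hp⟩ := isShortExact_ofHom_iff.1 hip
    exact h X Y Z i.hom p.hom hi hip hp

end ModuleCat

lemma inf_eq_iff_forall {C : Type u} [Category.{v} C] {P Q S : ObjectProperty C} :
    P ⊓ Q = S ↔ ∀ X, P X ∧ Q X ↔ S X :=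
  funext_iff.trans (forall_congr' fun _ ↦ eq_iff_iff)

section ModuleClasses

variable {R : Type} [CommRing R]

lemma ext1Vanishes_iff {M N : ModuleCat.{0} R} : Ext1Vanishes R M N ↔ ExtOneVanishes M N := by
  constructor
  · intro h E i p hip
    obtain ⟨hi, hip, hp⟩ := isShortExact_ofHom_iff.1 hip
    obtain ⟨s, hs⟩ := h E i.hom p.hom hi hip hp
    exact ⟨ModuleCat.ofHom s, ModuleCat.hom_ext hs⟩
  · intro h E i p hi hip hp
    obtain ⟨s, hs⟩ := h (isShortExact_ofHom_iff.2 ⟨hi, hip, hp⟩)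
    exact ⟨s.hom, ModuleCat.hom_ext_iff.1 hs⟩

variable (R) in
/-- The class `F(R)` of flat modules. -/
def flatModules : ObjectProperty (ModuleCat.{0} R) := fun M ↦ Module.Flat R M

lemma cotorsion_iff {M : ModuleCat.{0} R} :
    Cotorsion R M ↔ extRightOrthogonal (flatModules R) M :=
  forall₂_congr fun _ _ ↦ ext1Vanishes_iff

lemma gBCotorsion_iff {B : ModuleCat R → Prop} {M : ModuleCat.{0} R} :
    GBCotorsion R B M ↔ extRightOrthogonal (GorensteinBFlat R B) M :=
  forall₂_congr fun _ _ ↦ ext1Vanishes_iff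

lemma isThickClass_iff {W : ObjectProperty (ModuleCat.{0} R)} : IsThickClass R W ↔ IsThick W := by
  constructor
  · rintro ⟨hret, hext, hker, hcok⟩
    exact {
      retracts := ⟨fun ρ ↦ hret _ _ ρ.i.hom ρ.r.hom (ModuleCat.hom_ext_iff.1 ρ.retract)⟩
      extensions := isClosedUnderExtensions_iff.2 (forall_isShortExact_iff.2 hext)
      epiKernels := forall_isShortExact_iff.2 hker
      monoCokernels := forall_isShortExact_iff.2 hcok }
  · intro hW
    have := hW.retracts
    refine ⟨fun X Y i r hir ↦ ?_,
      forall_isShortExact_iff.1 (isClosedUnderExtensions_iff.1 hW.extensions),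
      forall_isShortExact_iff.1 hW.epiKernels, forall_isShortExact_iff.1 hW.monoCokernels⟩
    exact W.prop_of_retract
      { i := ModuleCat.ofHom i, r := ModuleCat.ofHom r, retract := ModuleCat.hom_ext hir }

lemma isClosedUnderExtensions_flatModules : (flatModules R).IsClosedUnderExtensions :=
  isClosedUnderExtensions_iff.2 <| forall_isShortExact_iff.2 fun _ _ _ _ _ hi hip hp hX hZ ↦
    have : Module.Flat R _ := hX
    have : Module.Flat R _ := hZ
    flat_of_shortExact hi hip hp

lemma closedUnderEpiKernels_flatModules : ClosedUnderEpiKernels (flatModules R) :=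
  forall_isShortExact_iff.2 fun _ _ _ _ _ hi hip hp hY hZ ↦
    have : Module.Flat R _ := hY
    have : Module.Flat R _ := hZ
    flat_kernel_of_shortExact hi hip hp

end ModuleClasses

end

/- STATEMENT 18: Let `B` be a class making `GF_B(R)` closed under extensions, so that
`(GF_B(R), GC_B(R))` and `(F(R), C(R))` are complete (hereditary) cotorsion pairs with
`F(R) ⊆ GF_B(R)`, `GC_B(R) ⊆ C(R)` and `GF_B(R) ∩ GC_B(R) = F(R) ∩ C(R)`. Then there exists a
unique thick class `W` such that `GF_B(R) ∩ W = F(R)` and `C(R) ∩ W = GC_B(R)` (Gillespie's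
two-cotorsion-pair theorem, giving the Gorenstein `B`-flat Hovey triple). -/

theorem exists_unique_thick_class_gorensteinBFlat_hovey_triple
    (R : Type) [CommRing R] (B : ModuleCat R → Prop)
    -- `GF_B(R)` is closed under extensions
    (hext : ∀ (X Y Z : ModuleCat.{0} R) (i : X →ₗ[R] Y) (p : Y →ₗ[R] Z),
      Function.Injective i → Function.Exact i p → Function.Surjective p →
      GorensteinBFlat R B X → GorensteinBFlat R B Z → GorensteinBFlat R B Y)
    -- both classes are closed under kernels of epimorphisms (heredity)
    (hher : ∀ (X Y Z : ModuleCat.{0} R) (i : X →ₗ[R] Y) (p : Y →ₗ[R] Z),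
      Function.Injective i → Function.Exact i p → Function.Surjective p →
      GorensteinBFlat R B Y → GorensteinBFlat R B Z → GorensteinBFlat R B X)
    -- completeness of `(GF_B(R), GC_B(R))`: special precovers and preenvelopes
    (hcomp₁ : ∀ M : ModuleCat.{0} R,
      (∃ (K A₀ : ModuleCat.{0} R) (i : K →ₗ[R] A₀) (p : A₀ →ₗ[R] M),
        Function.Injective i ∧ Function.Exact i p ∧ Function.Surjective p ∧
        GorensteinBFlat R B A₀ ∧ GBCotorsion R B K) ∧
      (∃ (K A₁ : ModuleCat.{0} R) (i : M →ₗ[R] K) (p : K →ₗ[R] A₁),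
        Function.Injective i ∧ Function.Exact i p ∧ Function.Surjective p ∧
        GBCotorsion R B K ∧ GorensteinBFlat R B A₁))
    -- completeness of `(F(R), C(R))`
    (hcomp₂ : ∀ M : ModuleCat.{0} R,
      (∃ (K A₀ : ModuleCat.{0} R) (i : K →ₗ[R] A₀) (p : A₀ →ₗ[R] M),
        Function.Injective i ∧ Function.Exact i p ∧ Function.Surjective p ∧
        Module.Flat R A₀ ∧ Cotorsion R K) ∧
      (∃ (K A₁ : ModuleCat.{0} R) (i : M →ₗ[R] K) (p : K →ₗ[R] A₁),
        Function.Injective i ∧ Function.Exact i p ∧ Function.Surjective p ∧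
        Cotorsion R K ∧ Module.Flat R A₁))
    -- the inclusions `F(R) ⊆ GF_B(R)` and `GC_B(R) ⊆ C(R)`
    (hincl₁ : ∀ M : ModuleCat.{0} R, Module.Flat R M → GorensteinBFlat R B M)
    (hincl₂ : ∀ M : ModuleCat.{0} R, GBCotorsion R B M → Cotorsion R M)
    -- the cores agree: `GF_B(R) ∩ GC_B(R) = F(R) ∩ C(R)`
    (hcore : ∀ M : ModuleCat.{0} R,
      (GorensteinBFlat R B M ∧ GBCotorsion R B M) ↔ (Module.Flat R M ∧ Cotorsion R M)) :
    ∃ W : ModuleCat.{0} R → Prop,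
      (IsThickClass R W ∧
        (∀ M, (GorensteinBFlat R B M ∧ W M) ↔ Module.Flat R M) ∧
        (∀ M, (Cotorsion R M ∧ W M) ↔ GBCotorsion R B M)) ∧
      ∀ W' : ModuleCat.{0} R → Prop,
        (IsThickClass R W' ∧
          (∀ M, (GorensteinBFlat R B M ∧ W' M) ↔ Module.Flat R M) ∧
          (∀ M, (Cotorsion R M ∧ W' M) ↔ GBCotorsion R B M)) →
        ∀ M, W' M ↔ W M := by
  have hcompatible : IsCompatiblePair (GorensteinBFlat R B) (flatModules R) := {
    le := hincl₁
    extensions_left := isClosedUnderExtensions_iff.2 (forall_isShortExact_iff.2 hext)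
    extensions_right := isClosedUnderExtensions_flatModules
    epiKernels_left := forall_isShortExact_iff.2 hher
    epiKernels_right := closedUnderEpiKernels_flatModules
    exists_precover M :=
      let ⟨⟨K, A, i, p, hi, hip, hp, hA, hK⟩, _⟩ := hcomp₁ M
      ⟨K, A, _, _, isShortExact_ofHom_iff.2 ⟨hi, hip, hp⟩, hA, gBCotorsion_iff.1 hK⟩
    exists_preenvelope M :=
      let ⟨_, K, A, i, p, hi, hip, hp, hK, hA⟩ := hcomp₂ M
      ⟨K, A, _, _, isShortExact_ofHom_iff.2 ⟨hi, hip, hp⟩, cotorsion_iff.1 hK, hA⟩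
    core := by
      simp only [gBCotorsion_iff, cotorsion_iff] at hcore
      exact inf_eq_iff_forall.2 hcore }
  obtain ⟨W, hW, huniq⟩ :=
    exists_unique_thick_class_gorensteinBFlat_hovey_triple_general hcompatible
  simp only [inf_eq_iff_forall] at hW huniq
  simp only [isThickClass_iff, cotorsion_iff, gBCotorsion_iff]
  exact ⟨W, hW, fun W' hW' M ↦ iff_of_eq (congrFun (huniq W' hW') M)⟩
end

section
/- If a class B of right R-modules makes GF_B(R) closed under extensions, then the right orthogonal class PGF_B(R)^⊥ is thick: it is closed under direct summands, extensions, cokernels of monomorphisms, and kernels of epimorphisms between its members. -/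
open LinearMap

/-- `M` is projectively coresolved Gorenstein `B`-flat if it is the zeroth cycle module
`Z₀ = ker (P₀ → P₋₁)` of an exact complex of projective modules which stays exact after
applying `N ⊗_R -` for every `N` in the class `B`. -/
def PGFBFlat (R : Type) [CommRing R] (B : ModuleCat R → Prop) (M : ModuleCat R) : Prop :=
  ∃ (P : ℤ → ModuleCat.{0} R) (d : ∀ n : ℤ, P (n + 1) →ₗ[R] P n),
    (∀ n : ℤ, Module.Projective R (P n)) ∧
    (∀ n : ℤ, d n ∘ₗ d (n + 1) = 0) ∧
    (∀ n : ℤ, Function.Exact (d (n + 1)) (d n)) ∧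
    (∀ N : ModuleCat R, B N → ∀ n : ℤ,
      Function.Exact (lTensor N (d (n + 1))) (lTensor N (d n))) ∧
    Nonempty (M ≃ₗ[R] LinearMap.ker (d (-1)))

/-!
If every `L ∈ 𝓛` sits in short exact sequences `0 → K → P → L → 0` and `0 → L → Q → C → 0` with
`P`, `Q` projective and `K, C ∈ 𝓛`, then `𝓛^⊥` is thick. Let `0 → X → Y → Z → 0` be exact.
Closure under cokernels of monomorphisms is dimension shifting: a map `K → Z` lifts to `Y` since
`Ext¹(K, X) = 0`, and the lift extends to `P` since `Ext¹(L, Y) = 0`. For kernels of epimorphisms,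
a map `L → Z` extends to `Q` since `Ext¹(C, Z) = 0` and then lifts to `Y` since `Q` is projective,
so the connecting map `Hom(L, Z) → Ext¹(L, X)` vanishes; as it is onto when `Ext¹(L, Y) = 0`, also
`Ext¹(L, X) = 0`. For `PGF_B(R)` both sequences are read off the defining complex, all of whose
cycles lie in `PGF_B(R)`.
-/

universe u v w

section Exactness

variable {R : Type u} [CommRing R] {M X Y Z : Type*}
  [AddCommGroup M] [Module R M] [AddCommGroup X] [Module R X]
  [AddCommGroup Y] [Module R Y] [AddCommGroup Z] [Module R Z]

theorem exists_comp_eq_of_exact_of_injective {i : X →ₗ[R] Y} {p : Y →ₗ[R] Z}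
    (hip : Function.Exact i p) (hi : Function.Injective i) {f : M →ₗ[R] Y} (hf : p ∘ₗ f = 0) :
    ∃ u : M →ₗ[R] X, i ∘ₗ u = f :=
  ⟨f.codRestrictOfInjective i hi fun m => (hip _).1 (LinearMap.congr_fun hf m),
    codRestrictOfInjective_comp ..⟩

theorem exists_comp_eq_of_exact_of_surjective {i : X →ₗ[R] Y} {p : Y →ₗ[R] Z}
    (hip : Function.Exact i p) (hp : Function.Surjective p) {f : Y →ₗ[R] M} (hf : f ∘ₗ i = 0) :
    ∃ u : Z →ₗ[R] M, u ∘ₗ p = f :=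
  (exact_lcomp_of_exact_of_surjective M hip hp f).1 hf

end Exactness

namespace Ext1Vanishes

variable {R : Type} [CommRing R] {L X Y Z : ModuleCat.{0} R}

theorem iff_exists_retraction :
    Ext1Vanishes R L X ↔ ∀ (E : ModuleCat.{0} R) (i : X →ₗ[R] E) (p : E →ₗ[R] L),
      Function.Injective i → Function.Exact i p → Function.Surjective p →
      ∃ r : E →ₗ[R] X, r ∘ₗ i = LinearMap.id :=
  forall₃_congr fun _ _ _ => forall₃_congr fun hi hip hp => (hip.split_tfae hi hp).out 0 1

/-- The map extends because the pushout of the sequence along it splits. -/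
theorem exists_extension (h : Ext1Vanishes R L X) {M : Type*} {N : Type}
    [AddCommGroup M] [Module R M] [AddCommGroup N] [Module R N]
    {f : M →ₗ[R] N} {q : N →ₗ[R] L} (hf : Function.Injective f) (hfq : Function.Exact f q)
    (hq : Function.Surjective q) (g : M →ₗ[R] X) : ∃ w : N →ₗ[R] X, w ∘ₗ f = g := by
  let S : Submodule R (X × N) := range (g.prod (-f))
  let i : X →ₗ[R] (X × N) ⧸ S := S.mkQ ∘ₗ inl R X N
  let j : N →ₗ[R] (X × N) ⧸ S := S.mkQ ∘ₗ inr R X N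
  have hS : S ≤ ker (q ∘ₗ snd R X N) := by
    rintro _ ⟨m, rfl⟩
    simp [hfq.apply_apply_eq_zero]
  let p : (X × N) ⧸ S →ₗ[R] L := S.liftQ (q ∘ₗ snd R X N) hS
  have j_f (m : M) : j (f m) = i (g m) := (Submodule.Quotient.eq S).2 ⟨-m, by simp⟩
  have hi : Function.Injective i := by
    refine (injective_iff_map_eq_zero i).2 fun x hx => ?_
    obtain ⟨m, hm⟩ := (Submodule.Quotient.mk_eq_zero S).1 hx
    obtain ⟨rfl, hfm⟩ : g m = x ∧ f m = 0 := by simpa using hm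
    rw [(map_eq_zero_iff f hf).1 hfm, map_zero]
  have hip : Function.Exact i p := by
    refine Function.Exact.of_comp_of_mem_range (funext fun x => by simp [i, p]) fun e he => ?_
    obtain ⟨⟨x, n⟩, rfl⟩ := S.mkQ_surjective e
    obtain ⟨m, rfl⟩ := (hfq n).1 he
    refine ⟨x + g m, ?_⟩
    rw [map_add, ← j_f]
    simp [i, j, ← Submodule.Quotient.mk_add]
  have hp : Function.Surjective p := .of_comp (g := j) hq
  obtain ⟨r, hr⟩ := iff_exists_retraction.1 h (.of R ((X × N) ⧸ S)) i p hi hip hp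
  exact ⟨r ∘ₗ j, LinearMap.ext fun m => by simpa [j_f] using LinearMap.congr_fun hr (g m)⟩

/-- The map lifts because the pullback of the sequence along it splits. -/
theorem exists_lift (h : Ext1Vanishes R L X) {M : Type} {N : Type*}
    [AddCommGroup M] [Module R M] [AddCommGroup N] [Module R N]
    {i : X →ₗ[R] M} {p : M →ₗ[R] N} (hi : Function.Injective i) (hip : Function.Exact i p)
    (hp : Function.Surjective p) (g : L →ₗ[R] N) : ∃ w : L →ₗ[R] M, p ∘ₗ w = g := by
  let E : Submodule R (M × L) := eqLocus (p ∘ₗ fst R M L) (g ∘ₗ snd R M L)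
  let j : X →ₗ[R] E := (inl R M L ∘ₗ i).codRestrict E fun x => by
    simp [E, hip.apply_apply_eq_zero]
  let q : E →ₗ[R] L := snd R M L ∘ₗ E.subtype
  have hj : Function.Injective j := fun x y hxy =>
    hi (congrArg (fun e : E => e.1.1) hxy)
  have hjq : Function.Exact j q := by
    refine Function.Exact.of_comp_of_mem_range rfl ?_
    rintro ⟨⟨m, l⟩, hml : p m = g l⟩ (rfl : l = 0)
    obtain ⟨x, rfl⟩ := (hip m).1 (by rw [hml, map_zero])
    exact ⟨x, rfl⟩
  have hq : Function.Surjective q := fun l =>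
    let ⟨m, hm⟩ := hp (g l)
    ⟨⟨(m, l), hm⟩, rfl⟩
  obtain ⟨s, hs⟩ := h (.of R E) j q hj hjq hq
  refine ⟨fst R M L ∘ₗ E.subtype ∘ₗ s, LinearMap.ext fun l => ?_⟩
  exact (s l).2.trans (congrArg g (LinearMap.congr_fun hs l))

theorem of_forall_exists_extension {K P : Type*} [AddCommGroup K] [Module R K]
    [AddCommGroup P] [Module R P] [Module.Projective R P] {j : K →ₗ[R] P} {q : P →ₗ[R] L}
    (hjq : Function.Exact j q) (hq : Function.Surjective q)
    (h : ∀ g : K →ₗ[R] X, ∃ w : P →ₗ[R] X, w ∘ₗ j = g) : Ext1Vanishes R L X := by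
  intro E i p hi hip hp
  obtain ⟨t, ht⟩ := Module.projective_lifting_property p q hp
  obtain ⟨g, hg⟩ : ∃ g : K →ₗ[R] X, i ∘ₗ g = t ∘ₗ j :=
    exists_comp_eq_of_exact_of_injective hip hi
      (by rw [← comp_assoc, ht, hjq.linearMap_comp_eq_zero])
  obtain ⟨w, rfl⟩ := h g
  obtain ⟨s, hs⟩ : ∃ s : L →ₗ[R] E, s ∘ₗ q = t - i ∘ₗ w :=
    exists_comp_eq_of_exact_of_surjective hjq hq (by rw [sub_comp, comp_assoc, hg, sub_self])
  refine ⟨s, (cancel_right hq).1 ?_⟩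
  rw [comp_assoc, hs, comp_sub, ht, ← comp_assoc, hip.linearMap_comp_eq_zero, zero_comp, sub_zero,
    id_comp]

theorem of_retract (h : Ext1Vanishes R L Y) {i : X →ₗ[R] Y} {r : Y →ₗ[R] X}
    (hri : r ∘ₗ i = LinearMap.id) : Ext1Vanishes R L X := by
  refine iff_exists_retraction.2 fun E a b ha hab hb => ?_
  obtain ⟨w, hw⟩ := h.exists_extension ha hab hb i
  exact ⟨r ∘ₗ w, by rw [comp_assoc, hw, hri]⟩

variable {i : X →ₗ[R] Y} {p : Y →ₗ[R] Z}

/-- Extending `Y → Z` to the given extension `E` of `L` by `Y` exhibits the kernel of `E → Z` as an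
extension of `L` by `X`; a section of that kernel is a section of `E`. -/
theorem of_extension (hi : Function.Injective i) (hip : Function.Exact i p)
    (hp : Function.Surjective p) (hX : Ext1Vanishes R L X) (hZ : Ext1Vanishes R L Z) :
    Ext1Vanishes R L Y := by
  intro E a b ha hab hb
  obtain ⟨w, hw⟩ := hZ.exists_extension ha hab hb p
  have w_a (y : Y) : w (a y) = p y := LinearMap.congr_fun hw y
  let a' : X →ₗ[R] ker w := (a ∘ₗ i).codRestrict (ker w) fun x => by
    simp [w_a, hip.apply_apply_eq_zero]
  have ha' : Function.Injective a' := fun x y hxy => hi (ha (congrArg Subtype.val hxy))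
  have hab' : Function.Exact a' (b ∘ₗ (ker w).subtype) := by
    refine Function.Exact.of_comp_of_mem_range
      (funext fun x => hab.apply_apply_eq_zero (i x)) ?_
    rintro ⟨e, he⟩ hbe
    obtain ⟨y, rfl⟩ := (hab e).1 hbe
    obtain ⟨x, rfl⟩ := (hip y).1 ((w_a y).symm.trans he)
    exact ⟨x, rfl⟩
  have hb' : Function.Surjective (b ∘ₗ (ker w).subtype) := by
    intro l
    obtain ⟨e, rfl⟩ := hb l
    obtain ⟨y, hy⟩ := hp (w e)
    exact ⟨⟨e - a y, by simp [w_a, hy]⟩, by simp [hab.apply_apply_eq_zero]⟩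
  obtain ⟨s, hs⟩ := hX (.of R (ker w)) a' (b ∘ₗ (ker w).subtype) ha' hab' hb'
  exact ⟨(ker w).subtype ∘ₗ s, hs⟩

/-- Dimension shifting: `Ext¹(K, X) = 0` stands for `Ext²(L, X) = 0`. -/
theorem of_cokernel {K : ModuleCat.{0} R} {P : Type} [AddCommGroup P] [Module R P]
    [Module.Projective R P] {j : K →ₗ[R] P} {q : P →ₗ[R] L}
    (hj : Function.Injective j) (hjq : Function.Exact j q) (hq : Function.Surjective q)
    (hi : Function.Injective i) (hip : Function.Exact i p) (hp : Function.Surjective p)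
    (hX : Ext1Vanishes R K X) (hY : Ext1Vanishes R L Y) : Ext1Vanishes R L Z := by
  refine of_forall_exists_extension hjq hq fun g => ?_
  obtain ⟨g', hg'⟩ := hX.exists_lift hi hip hp g
  obtain ⟨w, hw⟩ := hY.exists_extension hj hjq hq g'
  exact ⟨p ∘ₗ w, by rw [comp_assoc, hw, hg']⟩

theorem of_forall_exists_lift (hi : Function.Injective i) (hip : Function.Exact i p)
    (hlift : ∀ g : L →ₗ[R] Z, ∃ w : L →ₗ[R] Y, p ∘ₗ w = g) (hY : Ext1Vanishes R L Y) :
    Ext1Vanishes R L X := by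
  refine iff_exists_retraction.2 fun E a b ha hab hb => ?_
  obtain ⟨w, hw⟩ := hY.exists_extension ha hab hb i
  obtain ⟨g, hg⟩ : ∃ g : L →ₗ[R] Z, g ∘ₗ b = p ∘ₗ w :=
    exists_comp_eq_of_exact_of_surjective hab hb
      (by rw [comp_assoc, hw, hip.linearMap_comp_eq_zero])
  obtain ⟨t, rfl⟩ := hlift g
  obtain ⟨r, hr⟩ : ∃ r : E →ₗ[R] X, i ∘ₗ r = w - t ∘ₗ b :=
    exists_comp_eq_of_exact_of_injective hip hi (by rw [comp_sub, ← comp_assoc, hg, sub_self])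
  refine ⟨r, (cancel_left hi).1 ?_⟩
  rw [← comp_assoc, hr, sub_comp, hw, comp_assoc, hab.linearMap_comp_eq_zero, comp_zero, sub_zero,
    comp_id]

theorem of_kernel {C : ModuleCat.{0} R} {Q : Type} [AddCommGroup Q] [Module R Q]
    [Module.Projective R Q] {j : L →ₗ[R] Q} {q : Q →ₗ[R] C}
    (hj : Function.Injective j) (hjq : Function.Exact j q) (hq : Function.Surjective q)
    (hi : Function.Injective i) (hip : Function.Exact i p) (hp : Function.Surjective p)
    (hY : Ext1Vanishes R L Y) (hZ : Ext1Vanishes R C Z) : Ext1Vanishes R L X := by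
  refine of_forall_exists_lift hi hip (fun g => ?_) hY
  obtain ⟨g', hg'⟩ := hZ.exists_extension hj hjq hq g
  obtain ⟨t, ht⟩ := Module.projective_lifting_property p g' hp
  exact ⟨t ∘ₗ j, by rw [← comp_assoc, ht, hg']⟩

end Ext1Vanishes

/-- A thick class of modules: closed under direct summands, and containing the third term of a short
exact sequence as soon as it contains two of them. Direct summands are encoded as retracts. -/
structure IsThick_s19 {R : Type u} [Ring R] (𝓒 : ModuleCat.{v} R → Prop) : Prop where
  of_retract : ∀ (X Y : ModuleCat.{v} R) (i : X →ₗ[R] Y) (r : Y →ₗ[R] X),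
    r ∘ₗ i = LinearMap.id → 𝓒 Y → 𝓒 X
  of_extension : ∀ (X Y Z : ModuleCat.{v} R) (i : X →ₗ[R] Y) (p : Y →ₗ[R] Z),
    Function.Injective i → Function.Exact i p → Function.Surjective p → 𝓒 X → 𝓒 Z → 𝓒 Y
  of_cokernel : ∀ (X Y Z : ModuleCat.{v} R) (i : X →ₗ[R] Y) (p : Y →ₗ[R] Z),
    Function.Injective i → Function.Exact i p → Function.Surjective p → 𝓒 X → 𝓒 Y → 𝓒 Z
  of_kernel : ∀ (X Y Z : ModuleCat.{v} R) (i : X →ₗ[R] Y) (p : Y →ₗ[R] Z),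
    Function.Injective i → Function.Exact i p → Function.Surjective p → 𝓒 Y → 𝓒 Z → 𝓒 X

/-- The right orthogonal class `𝓛^⊥` of a class `𝓛` of modules with respect to `Ext¹`. -/
def RightOrthogonal {R : Type} [CommRing R] (𝓛 : ModuleCat.{0} R → Prop) (X : ModuleCat.{0} R) :
    Prop :=
  ∀ L, 𝓛 L → Ext1Vanishes R L X

theorem isThick_rightOrthogonal {R : Type} [CommRing R] {𝓛 : ModuleCat.{0} R → Prop}
    (exists_syzygy : ∀ L, 𝓛 L →
      ∃ (K P : ModuleCat.{0} R) (j : K →ₗ[R] P) (q : P →ₗ[R] L),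
        𝓛 K ∧ Module.Projective R P ∧
          Function.Injective j ∧ Function.Exact j q ∧ Function.Surjective q)
    (exists_cosyzygy : ∀ L, 𝓛 L →
      ∃ (Q C : ModuleCat.{0} R) (j : L →ₗ[R] Q) (q : Q →ₗ[R] C),
        𝓛 C ∧ Module.Projective R Q ∧
          Function.Injective j ∧ Function.Exact j q ∧ Function.Surjective q) :
    IsThick_s19 (RightOrthogonal 𝓛) where
  of_retract _ _ _ _ hri hY L hL := (hY L hL).of_retract hri
  of_extension _ _ _ _ _ hi hip hp hX hZ L hL := .of_extension hi hip hp (hX L hL) (hZ L hL)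
  of_cokernel _ _ _ _ _ hi hip hp hX hY L hL := by
    obtain ⟨K, P, j, q, hK, _, hj, hjq, hq⟩ := exists_syzygy L hL
    exact .of_cokernel hj hjq hq hi hip hp (hX K hK) (hY L hL)
  of_kernel _ _ _ _ _ hi hip hp hY hZ L hL := by
    obtain ⟨Q, C, j, q, hC, _, hj, hjq, hq⟩ := exists_cosyzygy L hL
    exact .of_kernel hj hjq hq hi hip hp (hY L hL) (hZ C hC)

/-- The complexes defining `PGF_B(R)`: exact complexes of projective modules that stay exact after
applying `N ⊗_R -` for every `N` in `B`. -/
structure IsPGFBComplex {R : Type u} [CommRing R] (B : ModuleCat.{w} R → Prop)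
    (P : ℤ → ModuleCat.{v} R) (d : ∀ n : ℤ, P (n + 1) →ₗ[R] P n) : Prop where
  projective : ∀ n : ℤ, Module.Projective R (P n)
  exact : ∀ n : ℤ, Function.Exact (d (n + 1)) (d n)
  lTensor_exact : ∀ N : ModuleCat R, B N → ∀ n : ℤ,
    Function.Exact (lTensor N (d (n + 1))) (lTensor N (d n))

section Complex

variable {R : Type u} [Ring R] {P : ℤ → ModuleCat.{v} R}

/-- The differential `P a → P b` of a complex for a propositional equality `b + 1 = a`. Shifted
complexes need it, because `n + 1 + k` and `n + k + 1` are not definitionally equal. -/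
def differentialOfEq (d : ∀ n : ℤ, P (n + 1) →ₗ[R] P n) {a b : ℤ} (h : b + 1 = a) :
    P a →ₗ[R] P b :=
  h ▸ d b

theorem nonempty_ker_equiv_ker_differentialOfEq (d : ∀ n : ℤ, P (n + 1) →ₗ[R] P n) {a b n : ℤ}
    (h : b + 1 = a) (hn : b = n) : Nonempty (ker (d n) ≃ₗ[R] ker (differentialOfEq d h)) := by
  subst hn h
  exact ⟨.refl R _⟩

/-- The map `P (n + 2) → Z n` onto the cycles induced by the differential of a complex. -/
def toCycles {d : ∀ n : ℤ, P (n + 1) →ₗ[R] P n}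
    (hd : ∀ n : ℤ, Function.Exact (d (n + 1)) (d n)) (n : ℤ) : P (n + 1 + 1) →ₗ[R] ker (d n) :=
  (d (n + 1)).codRestrict (ker (d n)) fun x => mem_ker.2 ((hd n).apply_apply_eq_zero x)

variable {d : ∀ n : ℤ, P (n + 1) →ₗ[R] P n} (hd : ∀ n : ℤ, Function.Exact (d (n + 1)) (d n))

theorem toCycles_surjective (n : ℤ) : Function.Surjective (toCycles hd n) := by
  rintro ⟨x, hx⟩
  obtain ⟨y, rfl⟩ := (hd n x).1 hx
  exact ⟨y, rfl⟩

theorem exact_subtype_toCycles (n : ℤ) :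
    Function.Exact (ker (d (n + 1))).subtype (toCycles hd n) := by
  rw [exact_iff, Submodule.range_subtype, toCycles, ker_codRestrict]

end Complex

namespace IsPGFBComplex

variable {R : Type u} [CommRing R] {B : ModuleCat.{w} R → Prop} {P : ℤ → ModuleCat.{v} R}
  {d : ∀ n : ℤ, P (n + 1) →ₗ[R] P n}

theorem shift (hP : IsPGFBComplex B P d) (k : ℤ) :
    IsPGFBComplex B (fun n => P (n + k))
      (fun n => differentialOfEq d (a := n + 1 + k) (b := n + k) (by ring)) where
  projective n := hP.projective (n + k)
  exact n := by
    have exact_of_eq {a b c : ℤ} (hb : c + 1 = b) (ha : b + 1 = a) :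
        Function.Exact (differentialOfEq d ha) (differentialOfEq d hb) := by
      subst ha hb
      exact hP.exact c
    exact exact_of_eq _ _
  lTensor_exact N hN n := by
    have exact_of_eq {a b c : ℤ} (hb : c + 1 = b) (ha : b + 1 = a) :
        Function.Exact (lTensor N (differentialOfEq d ha))
          (lTensor N (differentialOfEq d hb)) := by
      subst ha hb
      exact hP.lTensor_exact N hN c
    exact exact_of_eq _ _

end IsPGFBComplex

section PGFBFlat

variable {R : Type} [CommRing R] {B : ModuleCat.{w} R → Prop}

theorem pgfBFlat_iff {L : ModuleCat.{0} R} :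
    PGFBFlat R B L ↔ ∃ (P : ℤ → ModuleCat.{0} R) (d : ∀ n : ℤ, P (n + 1) →ₗ[R] P n),
      IsPGFBComplex B P d ∧ Nonempty (L ≃ₗ[R] ker (d (-1))) :=
  ⟨fun ⟨P, d, hproj, _, hexact, htensor, e⟩ => ⟨P, d, ⟨hproj, hexact, htensor⟩, e⟩,
    fun ⟨P, d, hP, e⟩ => ⟨P, d, hP.projective, fun n => (hP.exact n).linearMap_comp_eq_zero,
      hP.exact, hP.lTensor_exact, e⟩⟩

theorem IsPGFBComplex.pgfBFlat_ker {P : ℤ → ModuleCat.{0} R} {d : ∀ n : ℤ, P (n + 1) →ₗ[R] P n}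
    (hP : IsPGFBComplex B P d) (n : ℤ) : PGFBFlat R B (.of R (ker (d n))) :=
  pgfBFlat_iff.2 ⟨_, _, hP.shift (n + 1),
    nonempty_ker_equiv_ker_differentialOfEq d _ (by ring)⟩

theorem PGFBFlat.exists_syzygy {L : ModuleCat.{0} R} (hL : PGFBFlat R B L) :
    ∃ (K P : ModuleCat.{0} R) (j : K →ₗ[R] P) (q : P →ₗ[R] L),
      PGFBFlat R B K ∧ Module.Projective R P ∧
        Function.Injective j ∧ Function.Exact j q ∧ Function.Surjective q := by
  obtain ⟨P, d, hP, ⟨e⟩⟩ := pgfBFlat_iff.1 hL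
  exact ⟨.of R (ker (d (-1 + 1))), P (-1 + 1 + 1), (ker (d (-1 + 1))).subtype,
    e.symm ∘ₗ toCycles hP.exact (-1), hP.pgfBFlat_ker (-1 + 1), hP.projective _,
    Subtype.val_injective,
    LinearEquiv.postcomp_exact_iff_exact.2 (exact_subtype_toCycles hP.exact (-1)),
    e.symm.surjective.comp (toCycles_surjective hP.exact (-1))⟩

theorem PGFBFlat.exists_cosyzygy {L : ModuleCat.{0} R} (hL : PGFBFlat R B L) :
    ∃ (Q C : ModuleCat.{0} R) (j : L →ₗ[R] Q) (q : Q →ₗ[R] C),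
      PGFBFlat R B C ∧ Module.Projective R Q ∧
        Function.Injective j ∧ Function.Exact j q ∧ Function.Surjective q := by
  obtain ⟨P, d, hP, ⟨e⟩⟩ := pgfBFlat_iff.1 hL
  exact ⟨P (-2 + 1 + 1), .of R (ker (d (-2))), (ker (d (-2 + 1))).subtype ∘ₗ e.toLinearMap,
    toCycles hP.exact (-2), hP.pgfBFlat_ker (-2), hP.projective _,
    Subtype.val_injective.comp e.injective,
    LinearEquiv.precomp_exact_iff_exact.2 (exact_subtype_toCycles hP.exact (-2)),
    toCycles_surjective hP.exact (-2)⟩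

end PGFBFlat

theorem pgf_perp_is_thick_general (R : Type) [CommRing R] (B : ModuleCat.{w} R → Prop) :
    IsThick_s19 (RightOrthogonal (PGFBFlat R B)) :=
  isThick_rightOrthogonal (fun _ => PGFBFlat.exists_syzygy) (fun _ => PGFBFlat.exists_cosyzygy)

/- STATEMENT 19: If a class `B` of (right) `R`-modules containing the injective modules makes
`GF_B(R)` closed under extensions, then the right orthogonal class `PGF_B(R)^⊥` is thick: it is
closed under direct summands, extensions, cokernels of monomorphisms and kernels of
epimorphisms between its members. -/

theorem pgf_perp_is_thick
    (R : Type) [CommRing R] (B : ModuleCat R → Prop)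
    (hBinj : ∀ N : ModuleCat R, Module.Injective R N → B N)
    (hext : ∀ (X Y Z : ModuleCat.{0} R) (i : X →ₗ[R] Y) (p : Y →ₗ[R] Z),
      Function.Injective i → Function.Exact i p → Function.Surjective p →
      GorensteinBFlat R B X → GorensteinBFlat R B Z → GorensteinBFlat R B Y) :
    -- `PGF_B(R)^⊥` is closed under direct summands (retracts) ...
    (∀ (X Y : ModuleCat.{0} R) (i : X →ₗ[R] Y) (r : Y →ₗ[R] X),
      r ∘ₗ i = LinearMap.id →
      (∀ L, PGFBFlat R B L → Ext1Vanishes R L Y) →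
      (∀ L, PGFBFlat R B L → Ext1Vanishes R L X)) ∧
    -- ... under extensions ...
    (∀ (X Y Z : ModuleCat.{0} R) (i : X →ₗ[R] Y) (p : Y →ₗ[R] Z),
      Function.Injective i → Function.Exact i p → Function.Surjective p →
      (∀ L, PGFBFlat R B L → Ext1Vanishes R L X) →
      (∀ L, PGFBFlat R B L → Ext1Vanishes R L Z) →
      (∀ L, PGFBFlat R B L → Ext1Vanishes R L Y)) ∧
    -- ... under cokernels of monomorphisms ...
    (∀ (X Y Z : ModuleCat.{0} R) (i : X →ₗ[R] Y) (p : Y →ₗ[R] Z),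
      Function.Injective i → Function.Exact i p → Function.Surjective p →
      (∀ L, PGFBFlat R B L → Ext1Vanishes R L X) →
      (∀ L, PGFBFlat R B L → Ext1Vanishes R L Y) →
      (∀ L, PGFBFlat R B L → Ext1Vanishes R L Z)) ∧
    -- ... and under kernels of epimorphisms.
    (∀ (X Y Z : ModuleCat.{0} R) (i : X →ₗ[R] Y) (p : Y →ₗ[R] Z),
      Function.Injective i → Function.Exact i p → Function.Surjective p →
      (∀ L, PGFBFlat R B L → Ext1Vanishes R L Y) →
      (∀ L, PGFBFlat R B L → Ext1Vanishes R L Z) →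
      (∀ L, PGFBFlat R B L → Ext1Vanishes R L X)) := by
  have h := pgf_perp_is_thick_general R B
  exact ⟨h.of_retract, h.of_extension, h.of_cokernel, h.of_kernel⟩
end
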